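/- arXiv:1501.06822 — 2 statements merged into one kernel-verified Lean document; each statement's English description precedes it below -/
import Mathlib

section
/- For all real numbers ρ, ε with 0 < ρ < ε there is a constant C, depending only on ρ and ε, such that for all r, s ∈ (0,1): ∫_r^1 ( t/(t+s) )^ρ · t^{−ε} dt/t ≤ C·( r/(s+r) )^ρ · r^{−ε}. (Lemma A.5.) -/
open MeasureTheory Set

noncomputable section

/-!
The weight `w t = t / (t + s)` is increasing while `w t / t` is decreasing, so
`1 ≤ w t / w r ≤ t / r` for `r ≤ t`. Hence `w t ^ ρ ≤ w r ^ ρ * (t / r) ^ max ρ 0`, which eliminates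
`s` from the integral. Since `max ρ 0 < ε`, the remaining power of `t` is integrable at infinity,
and its integral over `(r, ∞)` is `(ε - max ρ 0)⁻¹ * r ^ (-ε)`.
-/

section Weight

variable {r s t : ℝ}

theorem div_add_self_le_div_self_add (hr : 0 < r) (hrt : r ≤ t) (hs : 0 ≤ s) :
    r / (s + r) ≤ t / (t + s) := by
  have ht : 0 < t := hr.trans_le hrt
  rw [div_le_div_iff₀ (by positivity) (by positivity)]
  linarith [mul_le_mul_of_nonneg_right hrt hs]

theorem div_self_add_le_mul_div (hr : 0 < r) (hrt : r ≤ t) (hs : 0 ≤ s) :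
    t / (t + s) ≤ r / (s + r) * (t / r) := by
  have ht : 0 < t := hr.trans_le hrt
  calc t / (t + s) ≤ t / (s + r) :=
        div_le_div_of_nonneg_left ht.le (by positivity) (by linarith)
    _ = r / (s + r) * (t / r) := by field_simp

theorem rpow_le_rpow_max_zero {x y : ℝ} (hx : 1 ≤ x) (hxy : x ≤ y) (ρ : ℝ) :
    x ^ ρ ≤ y ^ max ρ 0 :=
  calc x ^ ρ ≤ x ^ max ρ 0 := Real.rpow_le_rpow_of_exponent_le hx (le_max_left ρ 0)
    _ ≤ y ^ max ρ 0 := by gcongr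

theorem div_self_add_rpow_le (hr : 0 < r) (hrt : r ≤ t) (hs : 0 ≤ s) (ρ : ℝ) :
    (t / (t + s)) ^ ρ ≤ (r / (s + r)) ^ ρ * (t / r) ^ max ρ 0 := by
  have ht : 0 < t := hr.trans_le hrt
  have hw : 0 < r / (s + r) := by positivity
  have one_le_ratio : 1 ≤ t / (t + s) / (r / (s + r)) :=
    (one_le_div hw).2 (div_add_self_le_div_self_add hr hrt hs)
  have ratio_le : t / (t + s) / (r / (s + r)) ≤ t / r :=
    (div_le_iff₀' hw).2 (div_self_add_le_mul_div hr hrt hs)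
  rw [← div_le_iff₀' (by positivity), ← Real.div_rpow (by positivity) hw.le]
  exact rpow_le_rpow_max_zero one_le_ratio ratio_le ρ

end Weight

section ScaledPower

variable {p ε r t : ℝ}

theorem div_rpow_mul_rpow_neg_div (hr : 0 < r) (ht : 0 < t) (p ε : ℝ) :
    (t / r) ^ p * t ^ (-ε) / t = (r ^ p)⁻¹ * t ^ (p - ε - 1) := by
  rw [Real.div_rpow ht.le hr.le, Real.rpow_sub_one ht.ne', sub_eq_add_neg, Real.rpow_add ht]
  ring

theorem integrableOn_Ioi_div_rpow_mul_rpow_neg_div (hr : 0 < r) (hpε : p < ε) :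
    IntegrableOn (fun t ↦ (t / r) ^ p * t ^ (-ε) / t) (Ioi r) :=
  have integrable_rpow : IntegrableOn (fun t ↦ t ^ (p - ε - 1)) (Ioi r) :=
    integrableOn_Ioi_rpow_of_lt (by linarith) hr
  IntegrableOn.congr_fun (integrable_rpow.const_mul (r ^ p)⁻¹)
    (fun _ ht ↦ (div_rpow_mul_rpow_neg_div hr (hr.trans ht) p ε).symm) measurableSet_Ioi

theorem integral_Ioi_div_rpow_mul_rpow_neg_div (hr : 0 < r) (hpε : p < ε) :
    ∫ t in Ioi r, (t / r) ^ p * t ^ (-ε) / t = (ε - p)⁻¹ * r ^ (-ε) :=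
  calc ∫ t in Ioi r, (t / r) ^ p * t ^ (-ε) / t
      = ∫ t in Ioi r, (r ^ p)⁻¹ * t ^ (p - ε - 1) :=
        setIntegral_congr_fun measurableSet_Ioi
          fun _ ht ↦ div_rpow_mul_rpow_neg_div hr (hr.trans ht) p ε
    _ = (r ^ p)⁻¹ * (-r ^ (p - ε) / (p - ε)) := by
        rw [integral_const_mul, integral_Ioi_rpow_of_lt (by linarith) hr, sub_add_cancel]
    _ = (r ^ p)⁻¹ * (r ^ p * r ^ (-ε) / (ε - p)) := by
        rw [← Real.rpow_add hr, ← sub_eq_add_neg, ← neg_sub p ε, div_neg, neg_div]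
    _ = (ε - p)⁻¹ * r ^ (-ε) := by
        rw [mul_div_assoc, inv_mul_cancel_left₀ (Real.rpow_pos_of_pos hr p).ne', div_eq_inv_mul]

end ScaledPower

section WeightedIntegral

variable {ρ ε r s t : ℝ}

theorem weighted_integrand_nonneg (ht : 0 ≤ t) (hs : 0 ≤ s) (ρ ε : ℝ) :
    0 ≤ (t / (t + s)) ^ ρ * t ^ (-ε) / t := by
  positivity

theorem weighted_integrand_le (hr : 0 < r) (hrt : r ≤ t) (hs : 0 ≤ s) (ρ ε : ℝ) :
    (t / (t + s)) ^ ρ * t ^ (-ε) / t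
      ≤ (r / (s + r)) ^ ρ * ((t / r) ^ max ρ 0 * t ^ (-ε) / t) := by
  have ht : 0 < t := hr.trans_le hrt
  calc (t / (t + s)) ^ ρ * t ^ (-ε) / t
      ≤ (r / (s + r)) ^ ρ * (t / r) ^ max ρ 0 * t ^ (-ε) / t := by
        gcongr
        exact div_self_add_rpow_le hr hrt hs ρ
    _ = (r / (s + r)) ^ ρ * ((t / r) ^ max ρ 0 * t ^ (-ε) / t) := by ring

theorem integrableOn_Ioi_weighted_integrand (hρε : max ρ 0 < ε) (hr : 0 < r) (hs : 0 ≤ s) :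
    IntegrableOn (fun t ↦ (t / (t + s)) ^ ρ * t ^ (-ε) / t) (Ioi r) := by
  have measurable_integrand : Measurable fun t : ℝ ↦ (t / (t + s)) ^ ρ * t ^ (-ε) / t := by fun_prop
  refine ((integrableOn_Ioi_div_rpow_mul_rpow_neg_div hr hρε).const_mul
    ((r / (s + r)) ^ ρ)).mono' measurable_integrand.aestronglyMeasurable ?_
  refine ae_restrict_of_forall_mem measurableSet_Ioi fun t ht ↦ ?_
  rw [Real.norm_of_nonneg (weighted_integrand_nonneg (hr.trans ht).le hs ρ ε)]
  exact weighted_integrand_le hr ht.le hs ρ ε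

theorem integral_Ioi_weighted_integrand_le (hρε : max ρ 0 < ε) (hr : 0 < r) (hs : 0 ≤ s) :
    ∫ t in Ioi r, (t / (t + s)) ^ ρ * t ^ (-ε) / t
      ≤ (ε - max ρ 0)⁻¹ * (r / (s + r)) ^ ρ * r ^ (-ε) :=
  calc ∫ t in Ioi r, (t / (t + s)) ^ ρ * t ^ (-ε) / t
      ≤ ∫ t in Ioi r, (r / (s + r)) ^ ρ * ((t / r) ^ max ρ 0 * t ^ (-ε) / t) :=
        setIntegral_mono_on (integrableOn_Ioi_weighted_integrand hρε hr hs)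
          ((integrableOn_Ioi_div_rpow_mul_rpow_neg_div hr hρε).const_mul _) measurableSet_Ioi
          fun _ ht ↦ weighted_integrand_le hr ht.le hs ρ ε
    _ = (ε - max ρ 0)⁻¹ * (r / (s + r)) ^ ρ * r ^ (-ε) := by
        rw [integral_const_mul, integral_Ioi_div_rpow_mul_rpow_neg_div hr hρε]
        ring

theorem weighted_time_integral_estimate_general (hρε : max ρ 0 < ε) (hr : 0 < r) (hs : 0 ≤ s)
    {A : Set ℝ} (hA : A ⊆ Ioi r) :
    IntegrableOn (fun t ↦ (t / (t + s)) ^ ρ * t ^ (-ε) / t) A ∧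
      ∫ t in A, (t / (t + s)) ^ ρ * t ^ (-ε) / t
        ≤ (ε - max ρ 0)⁻¹ * (r / (s + r)) ^ ρ * r ^ (-ε) := by
  have integrable_Ioi := integrableOn_Ioi_weighted_integrand hρε hr hs
  have nonneg_Ioi : 0 ≤ᵐ[volume.restrict (Ioi r)] fun t ↦ (t / (t + s)) ^ ρ * t ^ (-ε) / t :=
    ae_restrict_of_forall_mem measurableSet_Ioi fun _ ht ↦
      weighted_integrand_nonneg (hr.trans ht).le hs ρ ε
  exact ⟨integrable_Ioi.mono_set hA,
    (setIntegral_mono_set integrable_Ioi nonneg_Ioi hA.eventuallyLE).trans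
      (integral_Ioi_weighted_integrand_le hρε hr hs)⟩

end WeightedIntegral

/-- **Lemma A.5.** For `0 < ρ < ε` there is a constant `C`, depending only on
`ρ` and `ε`, such that `∫_r^1 (t/(t+s))^ρ t^{-ε} dt/t ≤ C (r/(s+r))^ρ r^{-ε}` for all
`r, s ∈ (0,1)`. -/
theorem weighted_time_integral_estimate
    (ρ ε : ℝ) (hρ : 0 < ρ) (hρε : ρ < ε) :
    ∃ C, 0 < C ∧ ∀ r s : ℝ, r ∈ Set.Ioo (0 : ℝ) 1 → s ∈ Set.Ioo (0 : ℝ) 1 →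
      (∫ t in Set.Ioc r 1, (t / (t + s)) ^ ρ * t ^ (-ε) / t)
        ≤ C * (r / (s + r)) ^ ρ * r ^ (-ε) := by
  have max_lt_ε : max ρ 0 < ε := max_lt hρε (hρ.trans hρε)
  exact ⟨(ε - max ρ 0)⁻¹, inv_pos.2 (sub_pos.2 max_lt_ε), fun r s hr hs ↦
    (weighted_time_integral_estimate_general max_lt_ε hr.1 hs.1.le Ioc_subset_Ioi_self).2⟩
end
end

section
/- Let β ∈ (−2,0), let a be an integer with a ≥ |β|/2 + 1, and let ε ∈ (0,1). Then there is a constant C, depending only on β, a and ε, such that for all λ ≥ 1, all τ ∈ (0,1] and all t > 0: ∫_0^t e^{−λ(t−s)}·( τ/(τ+t−s) )^a·(τ+t−s)^{β/2} ds ≤ C·τ^{β/2+1−ε}·λ^{−ε}. (The core integral estimate, proved by splitting into the cases t ≤ τ and t ≥ τ, in the proof of the exponentially weighted Schauder estimates of Proposition 5.4.) -/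
open MeasureTheory Set

noncomputable section

/-!
After the substitution `u = t - s` the integrand is `τ ^ a * e^{-λu} (τ + u) ^ (β/2 - a)`. The
interpolation bound `e^{-λu} ≤ (λu) ^ (-ε)` extracts the factor `λ ^ (-ε)`. What remains is
homogeneous in `(τ, u)`, so the scaling `u = τ v` extracts the power of `τ` and leaves Euler's beta
integral of `v ^ (-ε) (1 + v) ^ (β/2 - a)` over the half-line; no distinction
between `t ≤ τ` and `t ≥ τ` is needed.
-/

open Filter

/-- Euler's beta integral of the second kind, `B(s, p - s)`. It converges exactly for `0 < s < p`,
and is used here as the constant in the estimates. -/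
def betaIntegralIoi (s p : ℝ) : ℝ :=
  ∫ v in Ioi (0 : ℝ), v ^ (s - 1) * (1 + v) ^ (-p)

section Beta

variable {s p τ : ℝ}

theorem integrableOn_Ioi_rpow_mul_add_rpow (hs : 0 < s) (hsp : s < p) (hτ : 0 < τ) :
    IntegrableOn (fun u ↦ u ^ (s - 1) * (τ + u) ^ (-p)) (Ioi 0) := by
  have hcont : ContinuousOn (fun u ↦ (τ + u) ^ (-p)) (Ici 0) :=
    (continuousOn_const.add continuousOn_id).rpow_const
      fun u hu ↦ Or.inl (add_pos_of_pos_of_nonneg hτ hu).ne'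
  refine mellin_convergent_of_isBigO_scalar (a := p) (b := 0)
    ((hcont.mono Ioi_subset_Ici_self).locallyIntegrableOn measurableSet_Ioi) ?_ hsp ?_ hs
  · refine .of_norm_eventuallyLE ?_
    filter_upwards [eventually_gt_atTop 0] with u hu
    rw [Real.norm_of_nonneg (by positivity)]
    exact Real.rpow_le_rpow_of_nonpos hu (by linarith) (by linarith)
  · simp only [neg_zero, Real.rpow_zero]
    exact ((hcont 0 self_mem_Ici).mono Ioi_subset_Ici_self).tendsto.isBigO_one ℝ

theorem integral_Ioi_rpow_mul_add_rpow (hτ : 0 < τ) :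
    ∫ u in Ioi (0 : ℝ), u ^ (s - 1) * (τ + u) ^ (-p) = τ ^ (s - p) * betaIntegralIoi s p := by
  have hscale : ∀ v ∈ Ioi (0 : ℝ), (τ * v) ^ (s - 1) * (τ + τ * v) ^ (-p) =
      τ ^ (s - p - 1) * (v ^ (s - 1) * (1 + v) ^ (-p)) := fun v (hv : 0 < v) ↦ by
    rw [← mul_one_add, Real.mul_rpow hτ.le hv.le, Real.mul_rpow hτ.le (by positivity),
      show s - p - 1 = s - 1 + -p by ring, Real.rpow_add hτ]
    ring
  calc ∫ u in Ioi (0 : ℝ), u ^ (s - 1) * (τ + u) ^ (-p)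
      = τ * ∫ v in Ioi (0 : ℝ), (τ * v) ^ (s - 1) * (τ + τ * v) ^ (-p) := by
        rw [integral_comp_mul_left_Ioi (fun u ↦ u ^ (s - 1) * (τ + u) ^ (-p)) 0 hτ, mul_zero,
          smul_eq_mul, mul_inv_cancel_left₀ hτ.ne']
    _ = τ * (τ ^ (s - p - 1) * betaIntegralIoi s p) := by
        rw [setIntegral_congr_fun measurableSet_Ioi hscale, integral_const_mul, betaIntegralIoi]
    _ = τ ^ (s - p) * betaIntegralIoi s p := by
        rw [← mul_assoc, Real.rpow_sub_one hτ.ne', mul_div_cancel₀ _ hτ.ne']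

theorem betaIntegralIoi_pos (hs : 0 < s) (hsp : s < p) : 0 < betaIntegralIoi s p := by
  have hpos : ∀ v ∈ Ioi (0 : ℝ), 0 < v ^ (s - 1) * (1 + v) ^ (-p) := fun v (hv : 0 < v) ↦ by
    positivity
  rw [betaIntegralIoi, setIntegral_pos_iff_support_of_nonneg_ae
    (ae_restrict_of_forall_mem measurableSet_Ioi fun v hv ↦ (hpos v hv).le)
    (integrableOn_Ioi_rpow_mul_add_rpow hs hsp one_pos),
    inter_eq_self_of_subset_right fun v hv ↦ Function.mem_support.2 (hpos v hv).ne',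
    Real.volume_Ioi]
  exact ENNReal.zero_lt_top

end Beta

theorem exp_neg_le_rpow_neg {ε x : ℝ} (hε : ε ∈ Icc 0 1) (hx : 0 < x) :
    Real.exp (-x) ≤ x ^ (-ε) :=
  calc Real.exp (-x) ≤ Real.exp (x * -ε) := Real.exp_le_exp.2 (by nlinarith [hε.2])
    _ = Real.exp x ^ (-ε) := Real.exp_mul x (-ε)
    _ ≤ x ^ (-ε) := Real.rpow_le_rpow_of_nonpos hx (by linarith [Real.add_one_le_exp x])
        (neg_nonpos.2 hε.1)

theorem setIntegral_Ioc_exp_mul_add_rpow_le {ε p lam τ : ℝ} (hε : ε ∈ Ico 0 1) (hp : 1 - ε < p)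
    (hlam : 0 < lam) (hτ : 0 < τ) (t : ℝ) :
    ∫ u in Ioc 0 t, Real.exp (-lam * u) * (τ + u) ^ (-p) ≤
      betaIntegralIoi (1 - ε) p * τ ^ (1 - ε - p) * lam ^ (-ε) := by
  set g : ℝ → ℝ := fun u ↦ lam ^ (-ε) * (u ^ (1 - ε - 1) * (τ + u) ^ (-p))
  have hg : IntegrableOn g (Ioi 0) :=
    (integrableOn_Ioi_rpow_mul_add_rpow (by linarith [hε.2]) hp hτ).const_mul _
  have hle : ∀ u ∈ Ioc 0 t, Real.exp (-lam * u) * (τ + u) ^ (-p) ≤ g u := fun u ⟨hu, _⟩ ↦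
    calc Real.exp (-lam * u) * (τ + u) ^ (-p) ≤ (lam * u) ^ (-ε) * (τ + u) ^ (-p) := by
          rw [neg_mul]
          gcongr
          exact exp_neg_le_rpow_neg (Ico_subset_Icc_self hε) (by positivity)
      _ = g u := by
          simp only [g, Real.mul_rpow hlam.le hu.le, mul_assoc, sub_sub_cancel_left]
  calc ∫ u in Ioc 0 t, Real.exp (-lam * u) * (τ + u) ^ (-p)
      ≤ ∫ u in Ioc 0 t, g u :=
        integral_mono_of_nonneg
          (ae_restrict_of_forall_mem measurableSet_Ioc fun u ⟨hu, _⟩ ↦ by positivity)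
          (hg.mono_set Ioc_subset_Ioi_self) (ae_restrict_of_forall_mem measurableSet_Ioc hle)
    _ ≤ ∫ u in Ioi 0, g u :=
        setIntegral_mono_set hg
          (ae_restrict_of_forall_mem measurableSet_Ioi fun u (hu : 0 < u) ↦ by positivity)
          Ioc_subset_Ioi_self.eventuallyLE
    _ = betaIntegralIoi (1 - ε) p * τ ^ (1 - ε - p) * lam ^ (-ε) := by
        rw [integral_const_mul, integral_Ioi_rpow_mul_add_rpow hτ]
        ring

theorem setIntegral_Ioc_comp_sub_left {E : Type*} [NormedAddCommGroup E] [NormedSpace ℝ E]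
    (f : ℝ → E) {t : ℝ} (ht : 0 ≤ t) : ∫ s in Ioc 0 t, f (t - s) = ∫ u in Ioc 0 t, f u := by
  simp only [← intervalIntegral.integral_of_le ht, intervalIntegral.integral_comp_sub_left,
    sub_self, sub_zero]

theorem weighted_schauder_integral_estimate_general {β a ε lam τ t : ℝ} (hε : ε ∈ Ico 0 1)
    (ha : 1 - ε < a - β / 2) (hlam : 0 < lam) (hτ : 0 < τ) (ht : 0 ≤ t) :
    ∫ s in Ioc 0 t, Real.exp (-lam * (t - s)) * (τ / (τ + t - s)) ^ a * (τ + t - s) ^ (β / 2) ≤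
      betaIntegralIoi (1 - ε) (a - β / 2) * τ ^ (β / 2 + 1 - ε) * lam ^ (-ε) := by
  have hkernel : ∀ u ∈ Ioc 0 t, Real.exp (-lam * u) * (τ / (τ + u)) ^ a * (τ + u) ^ (β / 2) =
      τ ^ a * (Real.exp (-lam * u) * (τ + u) ^ (-(a - β / 2))) := fun u ⟨hu, _⟩ ↦ by
    have hτu : 0 < τ + u := add_pos hτ hu
    rw [Real.div_rpow hτ.le hτu.le, neg_sub, Real.rpow_sub hτu]
    ring
  have hpow : τ ^ a * τ ^ (1 - ε - (a - β / 2)) = τ ^ (β / 2 + 1 - ε) := by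
    rw [← Real.rpow_add hτ]
    ring_nf
  simp only [add_sub_assoc τ t]
  rw [setIntegral_Ioc_comp_sub_left
    (fun u ↦ Real.exp (-lam * u) * (τ / (τ + u)) ^ a * (τ + u) ^ (β / 2)) ht,
    setIntegral_congr_fun measurableSet_Ioc hkernel, integral_const_mul, ← hpow]
  calc τ ^ a * ∫ u in Ioc 0 t, Real.exp (-lam * u) * (τ + u) ^ (-(a - β / 2))
      ≤ τ ^ a * (betaIntegralIoi (1 - ε) (a - β / 2) * τ ^ (1 - ε - (a - β / 2)) * lam ^ (-ε)) := by
        gcongr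
        exact setIntegral_Ioc_exp_mul_add_rpow_le hε ha hlam hτ t
    _ = betaIntegralIoi (1 - ε) (a - β / 2) * (τ ^ a * τ ^ (1 - ε - (a - β / 2))) * lam ^ (-ε) := by
        ring

/-- The core integral estimate in the exponentially weighted Schauder
estimates: for `β ∈ (-2,0)`, an integer `a ≥ |β|/2 + 1` and `ε ∈ (0,1)`, there is a constant
`C` such that for all `λ ≥ 1`, `τ ∈ (0,1]` and `t > 0`,
`∫_0^t e^{-λ(t-s)} (τ/(τ+t-s))^a (τ+t-s)^{β/2} ds ≤ C τ^{β/2+1-ε} λ^{-ε}`. -/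
theorem weighted_schauder_integral_estimate
    (β : ℝ) (hβ : β ∈ Set.Ioo (-2 : ℝ) 0) (a : ℕ) (ha : |β| / 2 + 1 ≤ (a : ℝ))
    (ε : ℝ) (hε : ε ∈ Set.Ioo (0 : ℝ) 1) :
    ∃ C, 0 < C ∧ ∀ lam : ℝ, 1 ≤ lam → ∀ τ : ℝ, τ ∈ Set.Ioc (0 : ℝ) 1 → ∀ t : ℝ, 0 < t →
      (∫ s in Set.Ioc (0 : ℝ) t,
          Real.exp (-lam * (t - s)) * (τ / (τ + t - s)) ^ a * (τ + t - s) ^ (β / 2))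
        ≤ C * τ ^ (β / 2 + 1 - ε) * lam ^ (-ε) := by
  have hεa : 1 - ε < a - β / 2 := by linarith [le_abs_self β, hε.1]
  exact ⟨betaIntegralIoi (1 - ε) (a - β / 2), betaIntegralIoi_pos (sub_pos.2 hε.2) hεa,
    fun lam hlam τ hτ t ht ↦ by
      simpa only [Real.rpow_natCast] using weighted_schauder_integral_estimate_general
        (Ioo_subset_Ico_self hε) hεa (zero_lt_one.trans_le hlam) hτ.1 ht.le⟩
end
end
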